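/- arXiv:2511.01754 — 4 statements merged into one kernel-verified Lean document; each statement's English description precedes it below -/
import Mathlib

section
/- Soundness of the while rule of access Hoare logic: for any type S of states, assertion B : S → Prop, and relation rS : S → S → Prop, define the execution relation of 'while B do S' by rW s s' := ∃ k : ℕ, ∃ f : ℕ → S, f 0 = s ∧ f k = s' ∧ (∀ i < k, B (f i) ∧ rS (f i) (f (i+1))) ∧ ¬ B (f k). For any assertion P : S → Prop, if AHT(fun s => B s → P s, rS, P) holds, then AHT(P, rW, fun s => ¬ B s → P s) holds. -/
/-- Access Hoare triple: if execution from `s` reaches `s'` and `Q s'`, then `P s`. -/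
def AHT {S : Type*} (P : S → Prop) (r : S → S → Prop) (Q : S → Prop) : Prop :=
  ∀ s s', r s s' → Q s' → P s

/-- Big-step execution relation of `while B do S` via finite iteration chains. -/
def rW {S : Type*} (B : S → Prop) (rS : S → S → Prop) : S → S → Prop :=
  fun s s' => ∃ k : ℕ, ∃ f : ℕ → S, f 0 = s ∧ f k = s' ∧
    (∀ i < k, B (f i) ∧ rS (f i) (f (i + 1))) ∧ ¬ B (f k)

theorem aht_while {S : Type*} (B : S → Prop) (rS : S → S → Prop) (P : S → Prop)
    (h : AHT (fun s => B s → P s) rS P) :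
    AHT P (rW B rS) (fun s => ¬ B s → P s) := by
  rintro s s' ⟨k, f, rfl, rfl, hstep, hB⟩ hQ
  -- `P` holds at the exit state `f k` and is carried backwards along the chain to `f 0`.
  exact Nat.decreasingInduction (motive := fun i _ => P (f i))
    (fun i hi hP => h _ _ (hstep i hi).2 hP (hstep i hi).1) (hQ hB) (Nat.zero_le k)
end

section
/- Soundness of access Hoare logic: for the while language over states S := V → Val (for types V of variables with decidable equality and Val of values), with commands given inductively by skip, assignment v := e (for e : S → Val), sequential composition, conditional (branching on a decidable test B : S → Prop), and while loops, with the standard big-step operational semantics exec C s s', and with the access Hoare logic derivation system given inductively by the skip axiom ⊢ ⦃P⦄ skip ⦃P⦄, the assignment axiom ⊢ ⦃fun s => P (update s v (e s))⦄ v := e ⦃P⦄, the consequence rule (from P₂ → P₁ pointwise, ⊢ ⦃P₂⦄ C ⦃Q₂⦄, and Q₁ → Q₂ pointwise, infer ⊢ ⦃P₁⦄ C ⦃Q₁⦄), the composition rule (from ⊢ ⦃P⦄ C₁ ⦃R⦄ and ⊢ ⦃R⦄ C₂ ⦃Q⦄ infer ⊢ ⦃P⦄ C₁;C₂ ⦃Q⦄),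 the conditional rule (from ⊢ ⦃fun s => B s → P s⦄ C₁ ⦃Q⦄ and ⊢ ⦃fun s => ¬B s → P s⦄ C₂ ⦃Q⦄ infer ⊢ ⦃P⦄ if B then C₁ else C₂ ⦃Q⦄), and the while rule (from ⊢ ⦃fun s => B s → P s⦄ C ⦃P⦄ infer ⊢ ⦃P⦄ while B do C ⦃fun s => ¬B s → P s⦄): whenever ⊢ ⦃P⦄ C ⦃Q⦄ is derivable, the access Hoare triple AHT(P, C, Q) is true, i.e., ∀ s s', exec C s s' → Q s' → P s. -/
/-!
Soundness is proved by induction on the derivation, inverting the execution in each case; truth of a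
triple is pulled backwards from final to initial states. The only rule needing more is the while
rule, where a second induction, on the execution (`while_access`), pulls `P` back through the
iterations: at the exit state the test is false, so the postcondition `¬ B → P` yields `P` there.
-/

/-- Commands of the while language over states `V → Val`:
skip, assignment, sequential composition, conditional on a decidable
(`Bool`-valued) test, and while loops. -/
inductive Cmd (V Val : Type*) where
  | skip : Cmd V Val
  | assign : V → ((V → Val) → Val) → Cmd V Val
  | seq : Cmd V Val → Cmd V Val → Cmd V Val
  | cond : ((V → Val) → Bool) → Cmd V Val → Cmd V Val → Cmd V Val
  | while : ((V → Val) → Bool) → Cmd V Val → Cmd V Val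

variable {V Val : Type*} [DecidableEq V]

/-- `update s v a` is the state equal to `s` except mapping `v` to `a`. -/
def update (s : V → Val) (v : V) (a : Val) : V → Val :=
  fun w => if w = v then a else s w

/-- Standard big-step operational semantics of the while language. -/
inductive Exec : Cmd V Val → (V → Val) → (V → Val) → Prop where
  | skip (s : V → Val) : Exec .skip s s
  | assign (v : V) (e : (V → Val) → Val) (s : V → Val) :
      Exec (.assign v e) s (update s v (e s))
  | seq {C₁ C₂ : Cmd V Val} {s s'' s' : V → Val} :
      Exec C₁ s s'' → Exec C₂ s'' s' → Exec (.seq C₁ C₂) s s'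
  | condTrue {B : (V → Val) → Bool} {C₁ C₂ : Cmd V Val} {s s' : V → Val} :
      B s → Exec C₁ s s' → Exec (.cond B C₁ C₂) s s'
  | condFalse {B : (V → Val) → Bool} {C₁ C₂ : Cmd V Val} {s s' : V → Val} :
      ¬ B s → Exec C₂ s s' → Exec (.cond B C₁ C₂) s s'
  | whileTrue {B : (V → Val) → Bool} {C : Cmd V Val} {s s'' s' : V → Val} :
      B s → Exec C s s'' → Exec (.while B C) s'' s' → Exec (.while B C) s s'
  | whileFalse {B : (V → Val) → Bool} {C : Cmd V Val} {s : V → Val} :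
      ¬ B s → Exec (.while B C) s s

/-- The derivation system of access Hoare logic. -/
inductive Deriv : ((V → Val) → Prop) → Cmd V Val → ((V → Val) → Prop) → Prop where
  | skip (P : (V → Val) → Prop) : Deriv P .skip P
  | assign (P : (V → Val) → Prop) (v : V) (e : (V → Val) → Val) :
      Deriv (fun s => P (update s v (e s))) (.assign v e) P
  | conseq {P₁ P₂ Q₁ Q₂ : (V → Val) → Prop} {C : Cmd V Val} :
      (∀ s, P₂ s → P₁ s) → Deriv P₂ C Q₂ → (∀ s, Q₁ s → Q₂ s) → Deriv P₁ C Q₁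
  | seq {P R Q : (V → Val) → Prop} {C₁ C₂ : Cmd V Val} :
      Deriv P C₁ R → Deriv R C₂ Q → Deriv P (.seq C₁ C₂) Q
  | cond {P Q : (V → Val) → Prop} {B : (V → Val) → Bool} {C₁ C₂ : Cmd V Val} :
      Deriv (fun s => B s → P s) C₁ Q → Deriv (fun s => ¬ B s → P s) C₂ Q →
      Deriv P (.cond B C₁ C₂) Q
  | while {P : (V → Val) → Prop} {B : (V → Val) → Bool} {C : Cmd V Val} :
      Deriv (fun s => B s → P s) C P → Deriv P (.while B C) (fun s => ¬ B s → P s)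

/-- Backward induction along a terminating run of a loop: `P` holds at the exit state, where the test
is false, and each iteration carries `P` from its end back to its start. -/
theorem while_access {P : (V → Val) → Prop} {B : (V → Val) → Bool} {C : Cmd V Val}
    (ih : ∀ s s', Exec C s s' → P s' → B s → P s) {s s' : V → Val}
    (h : Exec (.while B C) s s') (hQ : ¬ B s' → P s') : P s := by
  -- Induction on an execution needs a variable in place of the indexing command.
  generalize hW : Cmd.while B C = W at h
  induction h with
  | whileTrue hB hC _ _ ihW =>
    cases hW
    exact ih _ _ hC (ihW hQ rfl) hB
  | whileFalse hB =>
    cases hW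
    exact hQ hB
  | _ => cases hW

/-- Soundness of access Hoare logic. -/
theorem aHl_sound {P Q : (V → Val) → Prop} {C : Cmd V Val} (h : Deriv P C Q) :
    ∀ s s', Exec C s s' → Q s' → P s := by
  induction h with
  | skip P =>
    intro s s' he hQ
    cases he
    exact hQ
  | assign P v e =>
    intro s s' he hQ
    cases he
    exact hQ
  | conseq hP _ hQ ih =>
    exact fun s s' he hq => hP s (ih s s' he (hQ s' hq))
  | seq _ _ ih₁ ih₂ =>
    intro s s' he hQ
    cases he with
    | seq h₁ h₂ => exact ih₁ _ _ h₁ (ih₂ _ _ h₂ hQ)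
  | cond _ _ ih₁ ih₂ =>
    intro s s' he hQ
    cases he with
    | condTrue hB h₁ => exact ih₁ _ _ h₁ hQ hB
    | condFalse hB h₂ => exact ih₂ _ _ h₂ hQ hB
  -- The while rule; its constructor name is a keyword and cannot label an alternative.
  | _ =>
    rename_i ih
    exact fun s s' he hQ => while_access ih he hQ
end

section
/- Derivability of strongest preconditions in access Hoare logic: in the setting of the while language with big-step semantics exec and the access Hoare logic derivation system (skip axiom, assignment axiom, consequence rule, composition rule, conditional rule, while rule as in the soundness theorem), for every command C and every assertion Q, the access Hoare triple ⦃SP(C, Q)⦄ C ⦃Q⦄ is derivable, where SP(C, Q) s := ∃ s', exec C s s' ∧ Q s'. -/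
variable {V Val : Type*} [DecidableEq V]

/-- Derivability of strongest preconditions in access Hoare logic. -/
theorem aHl_sp_derivable (C : Cmd V Val) (Q : (V → Val) → Prop) :
    Deriv (fun s => ∃ s', Exec C s s' ∧ Q s') C Q := by
  -- `Q` must be general: composition and loops use the induction hypothesis at other assertions.
  induction C generalizing Q with
  | skip => exact .conseq (fun s h => ⟨s, .skip s, h⟩) (.skip Q) (fun _ h => h)
  | assign v e =>
    exact .conseq (fun s h => ⟨_, .assign v e s, h⟩) (.assign Q v e) (fun _ h => h)
  | seq C₁ C₂ ih₁ ih₂ =>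
    exact .conseq (fun _ ⟨_, h₁, s', h₂, hQ⟩ => ⟨s', .seq h₁ h₂, hQ⟩)
      (.seq (ih₁ _) (ih₂ Q)) (fun _ h => h)
  | cond B C₁ C₂ ih₁ ih₂ =>
    exact .cond
      (.conseq (fun _ ⟨s', h, hQ⟩ hB => ⟨s', .condTrue hB h, hQ⟩) (ih₁ Q) (fun _ h => h))
      (.conseq (fun _ ⟨s', h, hQ⟩ hB => ⟨s', .condFalse hB h, hQ⟩) (ih₂ Q) (fun _ h => h))
  | _ B C ih =>
    -- `ih` is used at the invariant, the strongest precondition of the whole loop.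
    exact .conseq (fun _ h => h)
      (.while (.conseq (fun _ ⟨_, h₁, s', h₂, hQ⟩ hB => ⟨s', .whileTrue hB h₁ h₂, hQ⟩)
        (ih _) (fun _ h => h)))
      (fun s hQ hB => ⟨s, .whileFalse hB, hQ⟩)
end

section
/- Completeness of access Hoare logic: in the setting of the while language with big-step semantics exec and the access Hoare logic derivation system (skip axiom, assignment axiom, consequence rule, composition rule, conditional rule, while rule as in the soundness theorem), for every command C and assertions P Q : S → Prop, if the access Hoare triple AHT(P, C, Q) is true (i.e., ∀ s s', exec C s s' → Q s' → P s), then ⦃P⦄ C ⦃Q⦄ is derivable. -/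
variable {V Val : Type*} [DecidableEq V]

/-- Completeness of access Hoare logic. -/
theorem aHl_complete {P Q : (V → Val) → Prop} {C : Cmd V Val}
    (h : ∀ s s', Exec C s s' → Q s' → P s) : Deriv P C Q := by
  induction C generalizing P Q with
  | skip => exact .conseq (fun s => h s s (.skip s)) (.skip Q) fun _ hq => hq
  | assign v e =>
    exact .conseq (fun s => h s _ (.assign v e s)) (.assign Q v e) fun _ hq => hq
  | seq C₁ C₂ ih₁ ih₂ =>
    exact .seq (R := fun s => ∃ s', Exec C₂ s s' ∧ Q s')
      (ih₁ fun s _ h₁ ⟨s', h₂, hq⟩ => h s s' (.seq h₁ h₂) hq)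
      (ih₂ fun _ s' h₂ hq => ⟨s', h₂, hq⟩)
  | cond B C₁ C₂ ih₁ ih₂ =>
    exact .cond (ih₁ fun s s' h₁ hq hB => h s s' (.condTrue hB h₁) hq)
      (ih₂ fun s s' h₂ hq hB => h s s' (.condFalse hB h₂) hq)
  -- The remaining case is the loop; `while` is a keyword and cannot name an alternative.
  | _ B C ih =>
    exact .conseq (P₂ := fun s => ∃ s', Exec (.while B C) s s' ∧ Q s')
      (fun s ⟨s', hw, hq⟩ => h s s' hw hq)
      (.while (ih fun _ _ hC ⟨s', hw, hq⟩ hB => ⟨s', .whileTrue hB hC hw, hq⟩))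
      fun s hq hB => ⟨s, .whileFalse hB, hq⟩
end
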